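/- Let G be a group acting by homeomorphisms on a topological space X. Suppose the action has exactly n orbits (n finite), and that every orbit is a locally closed subset of X. Then the orbits can be ordered O_1, …, O_n so that there exist closed subsets X = X_0 ⊇ X_1 ⊇ ⋯ ⊇ X_n = ∅ with X_{i-1} \ X_i = O_i for each 1 ≤ i ≤ n; equivalently, for each i the union O_{i+1} ∪ ⋯ ∪ O_n is closed in X and O_i is open in X_{i-1}. -/

import Mathlib

/-!
Because the group acts by homeomorphisms, the projection `X → X / G` is an open quotient map. Local
closedness descends along it, so every point of the finite space `X / G` is locally closed, and
hence `X / G` is T₀. Its specialization order is then a partial order; list its points along a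
linear extension in which every point comes before its specializations. Final segments of this list
are stable under specialization, hence closed by finiteness, and their preimages in `X` form the
filtration.
-/

open Function Topology

section FiniteT0

variable {Y : Type*}

theorem exists_equiv_fin_monotone [PartialOrder Y] [Finite Y] {n : ℕ} (hn : Nat.card Y = n) :
    ∃ e : Y ≃ Fin n, Monotone e := by
  have : Fintype (LinearExtension Y) := @Fintype.ofFinite _ ‹Finite Y›
  have hcard : Fintype.card (LinearExtension Y) = n := by rwa [← Nat.card_eq_fintype_card]
  let e : LinearExtension Y ≃o Fin n := (monoEquivOfFin _ hcard).symm
  exact ⟨e.toEquiv, e.monotone.comp toLinearExtension.monotone⟩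

variable [TopologicalSpace Y]

theorem exists_equiv_fin_le_of_specializes [T0Space Y] [Finite Y] {n : ℕ} (hn : Nat.card Y = n) :
    ∃ e : Y ≃ Fin n, ∀ x y, x ⤳ y → e x ≤ e y := by
  -- In Mathlib `x ≤ y` in the specialization order means `y ⤳ x`, whence the order dual.
  let := specializationOrder Y
  obtain ⟨e, he⟩ := exists_equiv_fin_monotone (Y := Yᵒᵈ) hn
  exact ⟨e, fun _ _ hxy ↦ he hxy⟩

theorem isClosed_iff_forall_specializes [AlexandrovDiscrete Y] {s : Set Y} :
    IsClosed s ↔ ∀ x y, x ⤳ y → x ∈ s → y ∈ s := by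
  simp only [← isOpen_compl_iff, isOpen_iff_forall_specializes, Set.mem_compl_iff, not_imp_not]

end FiniteT0

section LocallyClosed

variable {X Y : Type*} [TopologicalSpace X] [TopologicalSpace Y]

theorem mem_iff_of_inseparable_of_isLocallyClosed {x y : X} {s : Set X} (hxy : Inseparable x y)
    (hs : IsLocallyClosed s) : x ∈ s ↔ y ∈ s := by
  obtain ⟨U, Z, hU, hZ, rfl⟩ := hs
  exact and_congr (hxy.mem_open_iff hU) (hxy.mem_closed_iff hZ)

theorem t0Space_of_isLocallyClosed_singleton (h : ∀ x : X, IsLocallyClosed {x}) : T0Space X :=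
  ⟨fun _ y hxy ↦ (mem_iff_of_inseparable_of_isLocallyClosed hxy (h y)).2 rfl⟩

theorem isLocallyClosed_preimage_iff_of_isOpenQuotientMap {f : X → Y} (hf : IsOpenQuotientMap f)
    {s : Set Y} : IsLocallyClosed (f ⁻¹' s) ↔ IsLocallyClosed s := by
  rw [isLocallyClosed_iff_isOpen_coborder, isLocallyClosed_iff_isOpen_coborder,
    coborder_preimage hf.isOpenMap hf.continuous, hf.isQuotientMap.isOpen_preimage]

end LocallyClosed

section OrbitSpace

variable {G X : Type*} [Group G] [MulAction G X]

theorem preimage_orbitRel_mk_singleton (x : X) :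
    (Quotient.mk (MulAction.orbitRel G X)) ⁻¹' {⟦x⟧} = MulAction.orbit G x :=
  Set.ext fun _ ↦ Quotient.eq

theorem t0Space_orbitRel_quotient [TopologicalSpace X] [ContinuousConstSMul G X]
    (hlc : ∀ x : X, IsLocallyClosed (MulAction.orbit G x)) :
    T0Space (MulAction.orbitRel.Quotient G X) := by
  refine t0Space_of_isLocallyClosed_singleton (Quotient.forall.2 fun x ↦ ?_)
  rw [← isLocallyClosed_preimage_iff_of_isOpenQuotientMap MulAction.isOpenQuotientMap_quotientMk,
    preimage_orbitRel_mk_singleton]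
  exact hlc x

end OrbitSpace

theorem stmt_2_general {X Y : Type*} [TopologicalSpace X] [TopologicalSpace Y] [T0Space Y]
    [Finite Y] {f : X → Y} (hf : Continuous f) (hsurj : Surjective f) {n : ℕ}
    (hn : Nat.card Y = n) :
    ∃ (O : Fin n → Set X) (Xc : Fin (n + 1) → Set X),
      (∀ i, ∃ y : Y, O i = f ⁻¹' {y}) ∧
      (∀ y : Y, ∃ i, O i = f ⁻¹' {y}) ∧
      Injective O ∧
      Xc 0 = Set.univ ∧ Xc (Fin.last n) = ∅ ∧
      (∀ i, IsClosed (Xc i)) ∧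
      (∀ i : Fin n, Xc i.succ ⊆ Xc i.castSucc) ∧
      (∀ i : Fin n, Xc i.castSucc \ Xc i.succ = O i) := by
  obtain ⟨e, he⟩ := exists_equiv_fin_le_of_specializes hn
  have isClosed_final (i : Fin (n + 1)) : IsClosed {y | i ≤ (e y).castSucc} :=
    isClosed_iff_forall_specializes.2 fun x y hxy hx ↦
      hx.out.trans (Fin.castSucc_le_castSucc_iff.2 (he x y hxy))
  refine ⟨fun i ↦ f ⁻¹' {e.symm i}, fun i ↦ f ⁻¹' {y | i ≤ (e y).castSucc},
    fun i ↦ ⟨e.symm i, rfl⟩, fun y ↦ ⟨e y, congrArg (f ⁻¹' {·}) (e.symm_apply_apply y)⟩,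
    ?injective, ?first, ?last, fun i ↦ (isClosed_final i).preimage hf, ?decreasing,
    fun i ↦ Set.ext fun x ↦ ?difference⟩
  case injective =>
    exact hsurj.preimage_injective.comp (Set.singleton_injective.comp e.symm.injective)
  case first => exact Set.eq_univ_of_forall fun x ↦ Fin.zero_le _
  case last => exact Set.eq_empty_of_forall_notMem fun x ↦ (Fin.castSucc_lt_last _).not_ge
  case decreasing => exact fun i x ↦ Fin.castSucc_lt_succ.le.trans
  case difference =>
    calc i.castSucc ≤ (e (f x)).castSucc ∧ ¬ i.succ ≤ (e (f x)).castSucc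
      _ ↔ i ≤ e (f x) ∧ e (f x) ≤ i := by
        rw [Fin.castSucc_le_castSucc_iff, Fin.succ_le_castSucc_iff, not_lt]
      _ ↔ f x = e.symm i := by rw [← le_antisymm_iff, eq_comm, e.eq_symm_apply]

/-- If a group `G` acts by homeomorphisms on a topological space `X` with
exactly `n` orbits, each locally closed, then the orbits can be ordered `O_1, …, O_n` so that
there are closed subsets `X = X_0 ⊇ X_1 ⊇ ⋯ ⊇ X_n = ∅` with `X_{i-1} \ X_i = O_i`. -/
theorem stmt_2 {G X : Type*} [Group G] [TopologicalSpace X]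
    [MulAction G X] [ContinuousConstSMul G X] (n : ℕ)
    (hfin : Finite (MulAction.orbitRel.Quotient G X))
    (hn : Nat.card (MulAction.orbitRel.Quotient G X) = n)
    (hlc : ∀ x : X, IsLocallyClosed (MulAction.orbit G x)) :
    ∃ (O : Fin n → Set X) (Xc : Fin (n + 1) → Set X),
      (∀ i, ∃ x : X, O i = MulAction.orbit G x) ∧
      (∀ x : X, ∃ i, O i = MulAction.orbit G x) ∧
      Function.Injective O ∧
      Xc 0 = Set.univ ∧ Xc (Fin.last n) = ∅ ∧
      (∀ i, IsClosed (Xc i)) ∧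
      (∀ i : Fin n, Xc i.succ ⊆ Xc i.castSucc) ∧
      (∀ i : Fin n, Xc i.castSucc \ Xc i.succ = O i) := by
  have := t0Space_orbitRel_quotient hlc
  simpa only [Quotient.exists, Quotient.forall, preimage_orbitRel_mk_singleton] using
    stmt_2_general MulAction.isOpenQuotientMap_quotientMk.continuous Quotient.mk_surjective hn
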